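/- Let K be a field and V a K-vector space. There do not exist seven pairwise distinct affine lines ℓ₁, ..., ℓ₇ in V such that, for all i ≠ j, ℓᵢ ∩ ℓⱼ ≠ ∅ if and only if {i,j} belongs to G₄ = {{1,2},{3,4}} ∪ {{i,j} : 1 ≤ i ≤ 4, 5 ≤ j ≤ 7}. In other words, the graph G₄ is not the dual graph of any affine line arrangement. -/

import Mathlib

/-!
In the vertices `0, …, 6` of the statement: the lines `0, 1` meet in a point `P` and span a plane
`A`, the lines `2, 3` meet in `Q` and span a plane `B`. A line that meets both `0` and `1` passes
through `P` or lies in `A` (`mem_or_subset_of_meets`), and similarly for `2, 3`, `Q`, `B`. Since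
the lines `4, 5, 6` are pairwise disjoint, at most one of them passes through `P` and at most one
through `Q`; hence one of them, `a`, passes through neither and lies in `A ∩ B`. One of the other
two avoids `P`, so it lies in `A`; either it lies in `B` as well, or it passes through `Q`, and then
`Q ∈ A`. In both cases `A ∩ B` contains a point off `a` (`exists_line_and_point`). So `A = B`.
But in a single plane, disjoint lines are parallel (`exists_smul_eq_of_disjoint`), so `2` and `3` are both parallel to `0`, although they are distinct
and meet.
-/

/-- The incidence argument that forces the planes `A` and `B` to coincide, for arbitrary sets:
the `m i` are the lines `4, 5, 6`. -/
lemma exists_line_and_point {α : Type*} {A B : Set α} {P Q : α} (hQ : Q ∈ B)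
    {m : Fin 3 → Set α} (hne : ∀ i, (m i).Nonempty)
    (hdis : ∀ i j, i ≠ j → ∀ z, z ∈ m i → z ∉ m j)
    (hA : ∀ i, P ∈ m i ∨ m i ⊆ A) (hB : ∀ i, Q ∈ m i ∨ m i ⊆ B) :
    ∃ i, m i ⊆ A ∧ m i ⊆ B ∧ ∃ z, z ∈ A ∧ z ∈ B ∧ z ∉ m i := by
  have h3 : ∃ i, P ∉ m i ∧ Q ∉ m i := by
    by_contra! h
    have h0 := h 0
    have h1 := h 1
    have h2 := h 2
    have h01 := hdis 0 1 (by decide)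
    have h02 := hdis 0 2 (by decide)
    have h12 := hdis 1 2 (by decide)
    have := h01 P
    have := h02 P
    have := h12 P
    have := h01 Q
    have := h02 Q
    have := h12 Q
    tauto
  obtain ⟨i, hPi, hQi⟩ := h3
  refine ⟨i, (hA i).resolve_left hPi, (hB i).resolve_left hQi, ?_⟩
  by_contra! hz
  -- If `A ∩ B ⊆ m i`, both other lines pass through `P`, although they are disjoint.
  have key : ∀ j, j ≠ i → P ∈ m j := by
    intro j hj
    by_contra hPj
    have hjA := (hA j).resolve_left hPj
    rcases hB j with hQj | hjB
    · exact hQi (hz Q (hjA hQj) hQ)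
    · obtain ⟨z, hzj⟩ := hne j
      exact hdis j i hj z hzj (hz z (hjA hzj) (hjB hzj))
  obtain ⟨j, k, hj, hk, hjk⟩ : ∃ j k : Fin 3, j ≠ i ∧ k ≠ i ∧ j ≠ k := by
    clear * -
    revert i; decide
  exact hdis j k hjk P (key j hj) (key k hk)

section Lines

variable {K V : Type*} [Field K] [AddCommGroup V] [Module K V]

/-- The set `m` is an affine line with direction vector `d`; the parametrization is available
from any base point of `m`. Nonemptiness of `m` is not included. -/
def IsLineWithDir (m : AffineSubspace K V) (d : V) : Prop :=
  d ≠ 0 ∧ ∀ p ∈ m, ∀ z, z ∈ m ↔ ∃ t : K, z = p + t • d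

/-- The plane through `P` spanned by `u` and `v` (a genuine plane when these are independent). -/
def planeThrough (K : Type*) {V : Type*} [Field K] [AddCommGroup V] [Module K V]
    (P u v : V) : Set V :=
  {z | z - P ∈ Submodule.span K {u, v}}

lemma exists_isLineWithDir (m : AffineSubspace K V) (h : Module.finrank K m.direction = 1) :
    ∃ d, IsLineWithDir m d := by
  obtain ⟨⟨d, hd⟩, hd0, hspan⟩ := finrank_eq_one_iff'.1 h
  refine ⟨d, fun h0 => hd0 (Subtype.ext h0), fun p hp z => ⟨fun hz => ?_, ?_⟩⟩
  · obtain ⟨c, hc⟩ := hspan ⟨z -ᵥ p, AffineSubspace.vsub_mem_direction hz hp⟩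
    have hc' : c • d = z - p := congrArg Subtype.val hc
    exact ⟨c, by rw [hc']; abel⟩
  · rintro ⟨t, rfl⟩
    have := AffineSubspace.vadd_mem_of_mem_direction (m.direction.smul_mem t hd) hp
    rwa [vadd_eq_add, add_comm] at this

lemma linearIndependent_of_meet {m n : AffineSubspace K V} {u v P : V}
    (hm : IsLineWithDir m u) (hn : IsLineWithDir n v) (hne : m ≠ n) (hPm : P ∈ m) (hPn : P ∈ n) :
    LinearIndependent K ![u, v] := by
  rw [LinearIndependent.pair_iff' hm.1]
  intro a ha
  have ha0 : a ≠ 0 := by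
    rintro rfl
    exact hn.1 (by rw [← ha, zero_smul])
  apply hne
  ext z
  rw [hm.2 P hPm, hn.2 P hPn]
  constructor
  · rintro ⟨t, rfl⟩
    exact ⟨t * a⁻¹, by rw [← ha, smul_smul, inv_mul_cancel_right₀ ha0]⟩
  · rintro ⟨t, rfl⟩
    exact ⟨t * a, by rw [← ha, smul_smul]⟩

lemma mem_or_subset_of_meets {m n l : AffineSubspace K V} {u v d P : V}
    (hm : IsLineWithDir m u) (hn : IsLineWithDir n v) (hl : IsLineWithDir l d)
    (huv : LinearIndependent K ![u, v]) (hPm : P ∈ m) (hPn : P ∈ n)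
    (hlm : ((m : Set V) ∩ l).Nonempty) (hln : ((n : Set V) ∩ l).Nonempty) :
    P ∈ (l : Set V) ∨ (l : Set V) ⊆ planeThrough K P u v := by
  obtain ⟨x, hxm, hxl⟩ := hlm
  obtain ⟨y, hyn, hyl⟩ := hln
  obtain ⟨s, hs⟩ := (hm.2 P hPm x).1 hxm
  obtain ⟨t, ht⟩ := (hn.2 P hPn y).1 hyn
  obtain ⟨c, hc⟩ := (hl.2 x hxl y).1 hyl
  have hu : u ∈ Submodule.span K {u, v} := Submodule.subset_span (by simp)
  have hv : v ∈ Submodule.span K {u, v} := Submodule.subset_span (by simp)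
  by_cases hc0 : c = 0
  · -- The two intersection points coincide, so they are the point `P`.
    left
    have hst : s • u + (-t) • v = 0 := by
      rw [hc0, zero_smul, add_zero, ht, hs] at hc
      rw [neg_smul, add_left_cancel hc]; abel
    have h0 := (LinearIndependent.pair_iff.1 huv s (-t) hst).1
    rw [h0, zero_smul, add_zero] at hs
    exact hs ▸ hxl
  · right
    have hd : d ∈ Submodule.span K {u, v} := by
      have h1 : c • d = t • v - s • u := by
        rw [ht, hs] at hc
        rw [eq_sub_iff_add_eq, ← add_right_inj P, hc]; abel
      rw [← inv_smul_smul₀ hc0 d, h1]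
      exact Submodule.smul_mem _ _
        (Submodule.sub_mem _ (Submodule.smul_mem _ _ hv) (Submodule.smul_mem _ _ hu))
    intro z hz
    obtain ⟨r, hr⟩ := (hl.2 x hxl z).1 hz
    have h2 : z - P = s • u + r • d := by rw [hr, hs]; abel
    change z - P ∈ Submodule.span K {u, v}
    rw [h2]
    exact Submodule.add_mem _ (Submodule.smul_mem _ _ hu) (Submodule.smul_mem _ _ hd)

lemma span_pair_eq {u v d e : V}
    (hde : LinearIndependent K ![d, e]) (hd : d ∈ Submodule.span K {u, v})
    (he : e ∈ Submodule.span K {u, v}) :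
    Submodule.span K {d, e} = Submodule.span K {u, v} := by
  have hfin : FiniteDimensional K (Submodule.span K {u, v}) :=
    FiniteDimensional.span_of_finite K (by simp)
  apply Submodule.eq_of_le_of_finrank_le
  · rw [Submodule.span_le]
    rintro z (rfl | rfl) <;> assumption
  · have h1 := finrank_span_eq_card hde
    have h2 := finrank_range_le_card (R := K) ![u, v]
    rw [Matrix.range_cons_cons_empty] at h1 h2
    exact h2.trans h1.ge

/-- Disjoint lines in a common plane are parallel. -/
lemma exists_smul_eq_of_disjoint {m n : AffineSubspace K V} {u x p q a b : V}
    (hm : IsLineWithDir m u) (hn : IsLineWithDir n x) (hp : p ∈ m) (hq : q ∈ n)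
    (hu : u ∈ Submodule.span K {a, b}) (hx : x ∈ Submodule.span K {a, b})
    (hpq : p - q ∈ Submodule.span K {a, b}) (hdis : ¬ ((m : Set V) ∩ n).Nonempty) :
    ∃ c : K, c • u = x := by
  by_contra! h
  rw [← LinearIndependent.pair_iff' hm.1] at h
  rw [← span_pair_eq h hu hx, Submodule.mem_span_pair] at hpq
  obtain ⟨s, t, hst⟩ := hpq
  refine hdis ⟨q + t • x, (hm.2 p hp _).2 ⟨-s, ?_⟩, (hn.2 q hq _).2 ⟨t, rfl⟩⟩
  rw [neg_smul, ← sub_eq_add_neg, eq_sub_iff_add_eq, sub_eq_iff_eq_add'.1 hst.symm]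
  abel

end Lines


/-- The graph `G₄` with vertex set `{1,...,7}` and edge set
`{12, 34} ∪ {ij : 1 ≤ i ≤ 4, 5 ≤ j ≤ 7}` (here written with vertices `0,...,6`) is not
the dual graph of any affine line arrangement in any vector space over any field. -/
theorem graph_G4_not_dual_of_affine_lines
    (K : Type*) [Field K] (V : Type*) [AddCommGroup V] [Module K V] :
    ¬ ∃ ℓ : Fin 7 → AffineSubspace K V,
      (∀ i j, i ≠ j → ℓ i ≠ ℓ j) ∧
      (∀ i, ((ℓ i : Set V).Nonempty ∧ Module.finrank K (ℓ i).direction = 1)) ∧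
      (∀ i j : Fin 7, i ≠ j →
        (((ℓ i : Set V) ∩ (ℓ j : Set V)).Nonempty ↔
          ((i.val < 4 ∧ 4 ≤ j.val) ∨ (j.val < 4 ∧ 4 ≤ i.val) ∨
            ({i, j} : Finset (Fin 7)) = {0, 1} ∨
            ({i, j} : Finset (Fin 7)) = {2, 3}))) := by
  rintro ⟨ℓ, hdist, hline, hadj⟩
  choose d hd using fun i => exists_isLineWithDir (ℓ i) (hline i).2
  obtain ⟨P, hP0, hP1⟩ := (hadj 0 1 (by decide)).2 (by decide)
  obtain ⟨Q, hQ2, hQ3⟩ := (hadj 2 3 (by decide)).2 (by decide)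
  have h01 := linearIndependent_of_meet (hd 0) (hd 1) (hdist 0 1 (by decide)) hP0 hP1
  have h23 := linearIndependent_of_meet (hd 2) (hd 3) (hdist 2 3 (by decide)) hQ2 hQ3
  obtain ⟨i, hiA, hiB, z, hzA, hzB, hzi⟩ := exists_line_and_point
    (A := planeThrough K P (d 0) (d 1)) (B := planeThrough K Q (d 2) (d 3)) (P := P) (Q := Q)
    (by simp [planeThrough])
    (m := fun i : Fin 3 => (ℓ (Fin.natAdd 4 i) : Set V)) (fun i => (hline _).1)
    (fun i j hij z hzi hzj => by
      have h := (hadj (Fin.natAdd 4 i) (Fin.natAdd 4 j) (fun h => hij (Fin.natAdd_injective 3 4 h))).1 ⟨z, hzi, hzj⟩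
      revert h
      clear * - hij
      revert i j
      decide)
    (fun i => mem_or_subset_of_meets (hd 0) (hd 1) (hd (Fin.natAdd 4 i)) h01 hP0 hP1
      ((hadj _ _ (by revert i; decide)).2 (by revert i; decide))
      ((hadj _ _ (by revert i; decide)).2 (by revert i; decide)))
    (fun i => mem_or_subset_of_meets (hd 2) (hd 3) (hd (Fin.natAdd 4 i)) h23 hQ2 hQ3
      ((hadj _ _ (by revert i; decide)).2 (by revert i; decide))
      ((hadj _ _ (by revert i; decide)).2 (by revert i; decide)))
  obtain ⟨q, hq⟩ := (hline (Fin.natAdd 4 i)).1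
  have hl := hd (Fin.natAdd 4 i)
  set D := d (Fin.natAdd 4 i)
  have hqD : q + D ∈ ℓ (Fin.natAdd 4 i) := (hl.2 q hq _).2 ⟨1, by rw [one_smul]⟩
  have hind : LinearIndependent K ![D, z - q] := by
    rw [LinearIndependent.pair_iff' hl.1]
    intro a ha
    exact hzi ((hl.2 q hq z).2 ⟨a, by rw [ha]; abel⟩)
  -- `D` and `z - q` are differences of points of a plane containing `q`, `q + D` and `z`.
  have hplane : ∀ R u v : V, q ∈ planeThrough K R u v → q + D ∈ planeThrough K R u v →
      z ∈ planeThrough K R u v → Submodule.span K {D, z - q} = Submodule.span K {u, v} := by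
    intro R u v h1 h2 h3
    refine span_pair_eq hind ?_ ?_
    · have := (Submodule.span K {u, v}).sub_mem h2 h1
      rwa [sub_sub_sub_cancel_right, add_sub_cancel_left] at this
    · have := (Submodule.span K {u, v}).sub_mem h3 h1
      rwa [sub_sub_sub_cancel_right] at this
  have hW : Submodule.span K {d 2, d 3} = Submodule.span K {d 0, d 1} :=
    (hplane _ _ _ (hiB hq) (hiB hqD) hzB).symm.trans (hplane _ _ _ (hiA hq) (hiA hqD) hzA)
  have hPQ : P - Q ∈ Submodule.span K {d 0, d 1} := by
    have h1 : z - Q ∈ Submodule.span K {d 0, d 1} := hW ▸ hzB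
    have := Submodule.sub_mem _ h1 hzA
    rwa [sub_sub_sub_cancel_left] at this
  have hu : d 0 ∈ Submodule.span K {d 0, d 1} := Submodule.subset_span (by simp)
  have hx : d 2 ∈ Submodule.span K {d 0, d 1} := hW ▸ Submodule.subset_span (by simp)
  have hy : d 3 ∈ Submodule.span K {d 0, d 1} := hW ▸ Submodule.subset_span (by simp)
  obtain ⟨b, hb⟩ := exists_smul_eq_of_disjoint (hd 0) (hd 2) hP0 hQ2 hu hx hPQ
    (fun h => absurd ((hadj 0 2 (by decide)).1 h) (by decide))
  obtain ⟨c, hc⟩ := exists_smul_eq_of_disjoint (hd 0) (hd 3) hP0 hQ3 hu hy hPQ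
    (fun h => absurd ((hadj 0 3 (by decide)).1 h) (by decide))
  have hb0 : b ≠ 0 := by
    rintro rfl
    exact (hd 2).1 (by rw [← hb, zero_smul])
  refine (LinearIndependent.pair_iff' (hd 2).1).1 h23 (c * b⁻¹) ?_
  rw [← hb, ← hc, smul_smul, inv_mul_cancel_right₀ hb0]
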